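/- Let μ be a compactly supported Borel probability measure on ℝ whose free cumulants (k_n)_{n∈ℕ} are all nonnegative, i.e. ∫ tⁿ dμ(t) = ∑_{π ∈ NC(n)} ∏_{V block of π} k_{|V|} for all n ≥ 1 with k_n ≥ 0 for every n, and let L = {n ∈ ℕ : k_n ≠ 0}. Then the maximum ρ_μ of the support of μ satisfies log ρ_μ = sup{ (1/m₁(p)) ∑_{n∈L} p_n log(k_n / p_n) + Θ(m₁(p))/m₁(p) : p ∈ 𝔐₁¹(L) }. -/

import Mathlib

/-!
Write `M n` for the moments of `μ`, `Φ x = ∑ M n xⁿ` and `K w = 1 + ∑ kₙ wⁿ`.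

A non-crossing partition is determined by its Łukasiewicz word, which records the size of each
block at the position of its minimum. The letters sum to `n`, so bounding the sum over
non-crossing partitions by the sum over all words gives `M n ≤ (K w / w) ^ n` for every `w > 0`,
where `K` may even be truncated at degree `n`. Conversely, building a partition from a first block
and the partitions that fill the gaps between its elements gives `K (x Φ x) ≤ Φ x`. For `x < 1 / ρ`
the series `Φ x` converges: the moments are nonnegative, hence the odd ones prevent the negative
part of `μ` from dominating and `M n ≤ 2 cⁿ` whenever `μ` is carried by `(-∞, c]`.

For the variational side, divide `p` by its mean and add an atom at `0` so that it becomes a law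
`q` with mean one. The functional is then `∑ qₙ log (kₙ / qₙ)`, and since `q` has mean one,
Gibbs' inequality bounds it by `log (K w / w)` for every `w`. With `w = x Φ x` this is at most
`-log x`, hence every value is at most `log ρ`. Equality in Gibbs' inequality holds for the tilted
law `qₙ ∝ kₙ wⁿ`, which has mean one exactly at a critical point of `K w / w`; truncating `K` at
degree `n` makes the critical point exist, and the resulting value dominates `log (M n) / n`.
-/

open MeasureTheory Finset
open scoped ENNReal

noncomputable section

open Classical in
/-- The set of non-crossing partitions of `{1, …, n}`. -/
def NCP (n : ℕ) : Finset (Finset (Finset ℕ)) :=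
  ((Finset.Icc 1 n).powerset.powerset).filter fun π =>
    (∀ V ∈ π, V.Nonempty) ∧
    (∀ a ∈ Finset.Icc 1 n, ∃ V ∈ π, a ∈ V) ∧
    (∀ V₁ ∈ π, ∀ V₂ ∈ π, V₁ ≠ V₂ → V₁ ∩ V₂ = ∅) ∧
    ¬ ∃ V₁ ∈ π, ∃ V₂ ∈ π, V₁ ≠ V₂ ∧ ∃ x₁ ∈ V₁, ∃ y₁ ∈ V₁, ∃ x₂ ∈ V₂, ∃ y₂ ∈ V₂,
        x₁ < x₂ ∧ x₂ < y₁ ∧ y₁ < y₂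

/-- `Θ(m) = log(m−1) − m log(1−1/m)`. -/
def Theta (m : ℝ) : ℝ := Real.log (m - 1) - m * Real.log (1 - m⁻¹)

/-- A non-crossing partition of a finite set `S` of natural numbers, given by its set of blocks. -/
structure IsNonCrossingPartition (S : Finset ℕ) (π : Finset (Finset ℕ)) : Prop where
  subset : ∀ V ∈ π, V ⊆ S
  nonempty : ∀ V ∈ π, V.Nonempty
  cover : ∀ a ∈ S, ∃ V ∈ π, a ∈ V
  eq_of_mem : ∀ {V₁ V₂ a}, V₁ ∈ π → V₂ ∈ π → a ∈ V₁ → a ∈ V₂ → V₁ = V₂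
  eq_of_crossing : ∀ {V₁ V₂ a b c d}, V₁ ∈ π → V₂ ∈ π → a ∈ V₁ → b ∈ V₂ → c ∈ V₁ → d ∈ V₂ →
    a < b → b < c → c < d → V₁ = V₂

theorem mem_NCP_iff {n : ℕ} {π : Finset (Finset ℕ)} :
    π ∈ NCP n ↔ IsNonCrossingPartition (Icc 1 n) π := by
  refine (@Finset.mem_filter _ _ (_) _ _).trans ⟨?_, fun h ↦ ⟨?_, h.nonempty, h.cover, ?_, ?_⟩⟩
  · rintro ⟨hsub, hne, hcover, hdisj, hcross⟩
    refine ⟨fun V hV ↦ mem_powerset.1 (mem_powerset.1 hsub hV), hne, hcover, ?_, ?_⟩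
    · intro V₁ V₂ a h₁ h₂ ha₁ ha₂
      by_contra hV
      simpa [hdisj V₁ h₁ V₂ h₂ hV] using mem_inter.2 ⟨ha₁, ha₂⟩
    · intro V₁ V₂ a b c d h₁ h₂ ha hb hc hd hab hbc hcd
      by_contra hV
      exact hcross ⟨V₁, h₁, V₂, h₂, hV, a, ha, c, hc, b, hb, d, hd, hab, hbc, hcd⟩
  · exact mem_powerset.2 fun V hV ↦ mem_powerset.2 (h.subset V hV)
  · intro V₁ h₁ V₂ h₂ hV
    exact disjoint_iff_inter_eq_empty.1 <| Finset.disjoint_left.2 fun a ha₁ ha₂ ↦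
      hV (h.eq_of_mem h₁ h₂ ha₁ ha₂)
  · rintro ⟨V₁, h₁, V₂, h₂, hV, a, ha, c, hc, b, hb, d, hd, hab, hbc, hcd⟩
    exact hV (h.eq_of_crossing h₁ h₂ ha hb hc hd hab hbc hcd)

/-- The right-hand side of the free moment–cumulant formula: the `n`-th moment of the law with
free cumulants `k`. -/
def freeMoment {R : Type*} [CommSemiring R] (k : ℕ → R) (n : ℕ) : R :=
  ∑ π ∈ NCP n, ∏ V ∈ π, k V.card

theorem freeMoment_zero {R : Type*} [CommSemiring R] (k : ℕ → R) : freeMoment k 0 = 1 := by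
  have hNCP : NCP 0 = {∅} := by
    ext π
    rw [mem_NCP_iff, mem_singleton]
    refine ⟨fun h ↦ eq_empty_of_forall_notMem fun V hV ↦ ?_, ?_⟩
    · obtain ⟨a, ha⟩ := h.nonempty V hV
      simpa using h.subset V hV ha
    · rintro rfl
      exact ⟨by simp, by simp, by simp, by simp, by simp⟩
  rw [freeMoment, hNCP, sum_singleton, prod_empty]

theorem freeMoment_one {R : Type*} [CommSemiring R] (k : ℕ → R) : freeMoment k 1 = k 1 := by
  have hNCP : NCP 1 = {{{1}}} := by
    ext π
    rw [mem_NCP_iff, Icc_self, mem_singleton]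
    refine ⟨fun h ↦ ?_, ?_⟩
    · have hblock : ∀ V ∈ π, V = {1} := fun V hV ↦
        (h.nonempty V hV).subset_singleton_iff.1 (h.subset V hV)
      obtain ⟨V, hV, -⟩ := h.cover 1 (mem_singleton_self 1)
      exact eq_singleton_iff_unique_mem.2 ⟨hblock V hV ▸ hV, hblock⟩
    · rintro rfl
      exact ⟨by simp, by simp, by simp, by simp_all, by simp_all⟩
  rw [freeMoment, hNCP, sum_singleton, prod_singleton, card_singleton]

theorem freeMoment_congr {R : Type*} [CommSemiring R] {k k' : ℕ → R}
    (h : ∀ n, 1 ≤ n → k n = k' n) (n : ℕ) : freeMoment k n = freeMoment k' n :=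
  sum_congr rfl fun _ hπ ↦ prod_congr rfl fun V hV ↦
    h _ (card_pos.2 ((mem_NCP_iff.1 hπ).nonempty V hV))

theorem freeMoment_nonneg {k : ℕ → ℝ} (hk : ∀ n, 0 ≤ k n) (n : ℕ) : 0 ≤ freeMoment k n :=
  sum_nonneg fun _ _ ↦ prod_nonneg fun _ _ ↦ hk _

/-! ### Łukasiewicz words of non-crossing partitions -/

/-- The Łukasiewicz word of a partition `π`: its `i`-th letter is the size of the block of `π`
with minimum `i`, and `0` if there is no such block. -/
def lukasiewiczWord (π : Finset (Finset ℕ)) (i : ℕ) : ℕ :=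
  ∑ V ∈ π.filter fun V : Finset ℕ ↦ sInf (V : Set ℕ) = i, V.card

namespace IsNonCrossingPartition

variable {S : Finset ℕ} {π π' : Finset (Finset ℕ)}

theorem sInf_mem (h : IsNonCrossingPartition S π) {V : Finset ℕ} (hV : V ∈ π) :
    sInf (V : Set ℕ) ∈ V :=
  Nat.sInf_mem (h.nonempty V hV)

theorem sInf_injOn (h : IsNonCrossingPartition S π) :
    Set.InjOn (fun V : Finset ℕ ↦ sInf (V : Set ℕ)) π := fun _ hV _ hW e ↦
  h.eq_of_mem hV hW (h.sInf_mem hV) (by simpa only [e] using h.sInf_mem hW)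

theorem lukasiewiczWord_sInf (h : IsNonCrossingPartition S π) {V : Finset ℕ} (hV : V ∈ π) :
    lukasiewiczWord π (sInf (V : Set ℕ)) = V.card := by
  have hfilter : (π.filter fun W : Finset ℕ ↦ sInf (W : Set ℕ) = sInf (V : Set ℕ)) = {V} := by
    ext W
    simp only [mem_filter, mem_singleton]
    exact ⟨fun hW ↦ h.sInf_injOn hW.1 hV hW.2, by rintro rfl; exact ⟨hV, rfl⟩⟩
  rw [lukasiewiczWord, hfilter, sum_singleton]

theorem exists_sInf_eq_of_lukasiewiczWord_ne_zero {i : ℕ} (hi : lukasiewiczWord π i ≠ 0) :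
    ∃ V ∈ π, sInf (V : Set ℕ) = i := by
  obtain ⟨V, hV, -⟩ := exists_ne_zero_of_sum_ne_zero hi
  exact ⟨V, mem_filter.1 hV⟩

theorem lukasiewiczWord_eq_zero (h : IsNonCrossingPartition S π) {i : ℕ} (hi : i ∉ S) :
    lukasiewiczWord π i = 0 := by
  by_contra hne
  obtain ⟨V, hV, rfl⟩ := exists_sInf_eq_of_lukasiewiczWord_ne_zero hne
  exact hi (h.subset V hV (h.sInf_mem hV))

theorem prod_lukasiewiczWord {M : Type*} [CommMonoid M] (h : IsNonCrossingPartition S π)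
    {g : ℕ → M} (hg : g 0 = 1) :
    ∏ V ∈ π, g V.card = ∏ i ∈ S, g (lukasiewiczWord π i) := by
  refine prod_of_injOn (fun V : Finset ℕ ↦ sInf (V : Set ℕ)) h.sInf_injOn
    (fun V hV ↦ h.subset V hV (h.sInf_mem hV)) (fun i _ hi ↦ ?_)
    fun V hV ↦ by rw [h.lukasiewiczWord_sInf hV]
  suffices lukasiewiczWord π i = 0 by rw [this, hg]
  by_contra hne
  obtain ⟨V, hV, rfl⟩ := exists_sInf_eq_of_lukasiewiczWord_ne_zero hne
  exact hi ⟨V, hV, rfl⟩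

theorem sum_card (h : IsNonCrossingPartition S π) : ∑ V ∈ π, V.card = S.card := by
  rw [← card_biUnion fun V hV W hW hVW ↦
    Finset.disjoint_left.2 fun a haV haW ↦ hVW (h.eq_of_mem hV hW haV haW)]
  congr 1
  ext a
  simp only [mem_biUnion]
  exact ⟨fun ⟨V, hV, ha⟩ ↦ h.subset V hV ha, h.cover a⟩

theorem exists_sInf_eq (h : IsNonCrossingPartition S π) (h' : IsNonCrossingPartition S π')
    (hword : lukasiewiczWord π = lukasiewiczWord π') {V : Finset ℕ} (hV : V ∈ π) :
    ∃ V' ∈ π', sInf (V' : Set ℕ) = sInf (V : Set ℕ) ∧ V'.card = V.card := by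
  have hcard := h.lukasiewiczWord_sInf hV
  rw [hword] at hcard
  obtain ⟨V', hV', hinf⟩ := exists_sInf_eq_of_lukasiewiczWord_ne_zero
    (hcard ▸ (card_pos.2 (h.nonempty V hV)).ne')
  exact ⟨V', hV', hinf, by rw [← h'.lukasiewiczWord_sInf hV', hinf, hcard]⟩

-- A block of `π` with the same minimum as `V'` is still short of an element when `x` is reached,
-- so a block of `π` through `x` with smaller minimum would cross it.
theorem sInf_le_of_agree (h : IsNonCrossingPartition S π) (h' : IsNonCrossingPartition S π')
    (hword : lukasiewiczWord π = lukasiewiczWord π') {x : ℕ}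
    (hagree : ∀ V ∈ π, ∀ V' ∈ π', sInf (V : Set ℕ) = sInf (V' : Set ℕ) →
      ∀ y < x, y ∈ V ↔ y ∈ V')
    {U V' : Finset ℕ} (hU : U ∈ π) (hV' : V' ∈ π') (hxU : x ∈ U) (hxV' : x ∈ V') :
    sInf (V' : Set ℕ) ≤ sInf (U : Set ℕ) := by
  by_contra! hlt
  obtain ⟨V, hV, hinf, hcard⟩ := h'.exists_sInf_eq h hword.symm hV'
  have hUV : U ≠ V := by rintro rfl; exact hlt.ne hinf
  have hxV : x ∉ V := fun hx ↦ hUV (h.eq_of_mem hU hV hxU hx)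
  have hVx : sInf (V : Set ℕ) < x :=
    lt_of_le_of_ne (hinf ▸ Nat.sInf_le hxV') fun e ↦ hxV (e ▸ h.sInf_mem hV)
  obtain ⟨y, hyV, hxy⟩ : ∃ y ∈ V, x < y := by
    by_contra! hle
    refine (card_lt_card ⟨fun y hy ↦ ?_, fun hsub ↦ hxV (hsub hxV')⟩).ne hcard
    exact (hagree V hV V' hV' hinf y
      (lt_of_le_of_ne (hle y hy) fun e ↦ hxV (e ▸ hy))).1 hy
  exact hUV (h.eq_of_crossing hU hV (h.sInf_mem hU) (h.sInf_mem hV) hxU hyV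
    (hinf ▸ hlt) hVx hxy)

theorem mem_iff_mem_of_sInf_eq (h : IsNonCrossingPartition S π)
    (h' : IsNonCrossingPartition S π') (hword : lukasiewiczWord π = lukasiewiczWord π') (x : ℕ) :
    ∀ V ∈ π, ∀ V' ∈ π', sInf (V : Set ℕ) = sInf (V' : Set ℕ) → (x ∈ V ↔ x ∈ V') := by
  induction x using Nat.strong_induction_on with
  | _ x ih =>
    have hagree : ∀ V ∈ π, ∀ V' ∈ π', sInf (V : Set ℕ) = sInf (V' : Set ℕ) →
        ∀ y < x, y ∈ V ↔ y ∈ V' := fun V hV V' hV' e y hy ↦ ih y hy V hV V' hV' e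
    have hagree' : ∀ V' ∈ π', ∀ V ∈ π, sInf (V' : Set ℕ) = sInf (V : Set ℕ) →
        ∀ y < x, y ∈ V' ↔ y ∈ V := fun V' hV' V hV e y hy ↦ (ih y hy V hV V' hV' e.symm).symm
    have hinf_eq : ∀ U ∈ π, ∀ U' ∈ π', x ∈ U → x ∈ U' →
        sInf (U : Set ℕ) = sInf (U' : Set ℕ) := fun U hU U' hU' hx hx' ↦
      le_antisymm (h'.sInf_le_of_agree h hword.symm hagree' hU' hU hx' hx)
        (h.sInf_le_of_agree h' hword hagree hU hU' hx hx')
    intro V hV V' hV' e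
    constructor
    · intro hx
      obtain ⟨U', hU', hxU'⟩ := h'.cover x (h.subset V hV hx)
      rwa [h'.sInf_injOn hV' hU' (e.symm.trans (hinf_eq V hV U' hU' hx hxU'))]
    · intro hx
      obtain ⟨U, hU, hxU⟩ := h.cover x (h'.subset V' hV' hx)
      rwa [h.sInf_injOn hV hU (e.trans (hinf_eq U hU V' hV' hxU hx).symm)]

theorem subset_of_lukasiewiczWord_eq (h : IsNonCrossingPartition S π)
    (h' : IsNonCrossingPartition S π') (hword : lukasiewiczWord π = lukasiewiczWord π') :
    π ⊆ π' := fun V hV ↦ by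
  obtain ⟨V', hV', hinf, -⟩ := h.exists_sInf_eq h' hword hV
  have : V = V' := Finset.ext fun x ↦ h.mem_iff_mem_of_sInf_eq h' hword x V hV V' hV' hinf.symm
  exact this ▸ hV'

theorem eq_of_lukasiewiczWord_eq (h : IsNonCrossingPartition S π)
    (h' : IsNonCrossingPartition S π') (hword : lukasiewiczWord π = lukasiewiczWord π') :
    π = π' :=
  (h.subset_of_lukasiewiczWord_eq h' hword).antisymm
    (h'.subset_of_lukasiewiczWord_eq h hword.symm)

end IsNonCrossingPartition

theorem freeMoment_mul_pow {R : Type*} [CommSemiring R] (k : ℕ → R) (w : R) (n : ℕ) :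
    freeMoment (fun a ↦ k a * w ^ a) n = freeMoment k n * w ^ n := by
  rw [freeMoment, freeMoment, sum_mul]
  refine sum_congr rfl fun π hπ ↦ ?_
  rw [prod_mul_distrib, prod_pow_eq_pow_sum, (mem_NCP_iff.1 hπ).sum_card, Nat.card_Icc,
    Nat.add_sub_cancel]

theorem lukasiewiczWord_mem_range {n : ℕ} {π : Finset (Finset ℕ)} (hπ : π ∈ NCP n) (i : ℕ) :
    lukasiewiczWord π i ∈ range (n + 1) := by
  rw [mem_range, Nat.lt_succ_iff]
  calc lukasiewiczWord π i ≤ ∑ V ∈ π, V.card := sum_le_sum_of_subset (filter_subset _ _)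
    _ = n := by rw [(mem_NCP_iff.1 hπ).sum_card, Nat.card_Icc, Nat.add_sub_cancel]

theorem injOn_restrict_lukasiewiczWord (n : ℕ) :
    Set.InjOn (fun π ↦ (Icc 1 n).restrict (lukasiewiczWord π)) (NCP n) := by
  intro π hπ π' hπ' hword
  have h := mem_NCP_iff.1 hπ
  have h' := mem_NCP_iff.1 hπ'
  refine h.eq_of_lukasiewiczWord_eq h' (funext fun i ↦ ?_)
  by_cases hi : i ∈ Icc 1 n
  · exact congrFun hword ⟨i, hi⟩
  · rw [h.lukasiewiczWord_eq_zero hi, h'.lukasiewiczWord_eq_zero hi]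

theorem freeMoment_le_sum_pow {k : ℕ → ℝ} (hk : ∀ n, 0 ≤ k n) (hk0 : k 0 = 1) (n : ℕ) :
    freeMoment k n ≤ (∑ a ∈ range (n + 1), k a) ^ n := by
  calc freeMoment k n
      = ∑ π ∈ NCP n, ∏ i : Icc 1 n, k ((Icc 1 n).restrict (lukasiewiczWord π) i) :=
        sum_congr rfl fun π hπ ↦ by
          rw [(mem_NCP_iff.1 hπ).prod_lukasiewiczWord hk0, ← prod_coe_sort]; rfl
    _ = ∑ f ∈ (NCP n).image fun π ↦ (Icc 1 n).restrict (lukasiewiczWord π), ∏ i, k (f i) :=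
        by rw [sum_image (injOn_restrict_lukasiewiczWord n)]
    _ ≤ ∑ f ∈ Fintype.piFinset fun _ : Icc 1 n ↦ range (n + 1), ∏ i, k (f i) := by
        refine sum_le_sum_of_subset_of_nonneg ?_ fun _ _ _ ↦ prod_nonneg fun _ _ ↦ hk _
        simp only [image_subset_iff, Fintype.mem_piFinset]
        exact fun π hπ i ↦ lukasiewiczWord_mem_range hπ i
    _ = (∑ a ∈ range (n + 1), k a) ^ n := by
        rw [← prod_univ_sum, prod_const, card_univ, Fintype.card_coe, Nat.card_Icc,
          Nat.add_sub_cancel]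

theorem freeMoment_le_div_pow {k : ℕ → ℝ} (hk : ∀ n, 0 ≤ k n) (hk0 : k 0 = 1) {w : ℝ}
    (hw : 0 < w) (n : ℕ) :
    freeMoment k n ≤ ((∑ a ∈ range (n + 1), k a * w ^ a) / w) ^ n := by
  rw [div_pow, le_div_iff₀ (pow_pos hw n), ← freeMoment_mul_pow]
  exact freeMoment_le_sum_pow (fun a ↦ mul_nonneg (hk a) (pow_nonneg hw.le a))
    (by rw [hk0, pow_zero, mul_one]) n

/-! ### Gluing non-crossing partitions -/

/-- The blocks of `π` translated by `c`. -/
def shiftBlocks (c : ℕ) (π : Finset (Finset ℕ)) : Finset (Finset ℕ) :=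
  π.map (mapEmbedding (addRightEmbedding c)).toEmbedding

theorem mem_shiftBlocks {c : ℕ} {π : Finset (Finset ℕ)} {W : Finset ℕ} :
    W ∈ shiftBlocks c π ↔ ∃ V ∈ π, V.map (addRightEmbedding c) = W :=
  mem_map

theorem shiftBlocks_injective (c : ℕ) : Function.Injective (shiftBlocks c) :=
  map_injective _

theorem prod_shiftBlocks {M : Type*} [CommMonoid M] (g : ℕ → M) (c : ℕ)
    (π : Finset (Finset ℕ)) : ∏ V ∈ shiftBlocks c π, g V.card = ∏ V ∈ π, g V.card := by
  rw [shiftBlocks, prod_map]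
  exact prod_congr rfl fun V _ ↦ congrArg g (card_map _)

namespace IsNonCrossingPartition

variable {S T : Finset ℕ} {π σ : Finset (Finset ℕ)}

theorem shift (h : IsNonCrossingPartition S π) (c : ℕ) :
    IsNonCrossingPartition (S.map (addRightEmbedding c)) (shiftBlocks c π) where
  subset W hW := by
    obtain ⟨V, hV, rfl⟩ := mem_shiftBlocks.1 hW
    exact map_subset_map.2 (h.subset V hV)
  nonempty W hW := by
    obtain ⟨V, hV, rfl⟩ := mem_shiftBlocks.1 hW
    exact (h.nonempty V hV).map
  cover b hb := by
    obtain ⟨a, ha, rfl⟩ := mem_map.1 hb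
    obtain ⟨V, hV, haV⟩ := h.cover a ha
    exact ⟨_, mem_shiftBlocks.2 ⟨V, hV, rfl⟩, mem_map_of_mem _ haV⟩
  eq_of_mem hW₁ hW₂ h₁ h₂ := by
    obtain ⟨V₁, hV₁, rfl⟩ := mem_shiftBlocks.1 hW₁
    obtain ⟨V₂, hV₂, rfl⟩ := mem_shiftBlocks.1 hW₂
    obtain ⟨a, ha, rfl⟩ := mem_map.1 h₁
    rw [h.eq_of_mem hV₁ hV₂ ha ((mem_map' _).1 h₂)]
  eq_of_crossing hW₁ hW₂ ha hb hc hd hab hbc hcd := by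
    obtain ⟨V₁, hV₁, rfl⟩ := mem_shiftBlocks.1 hW₁
    obtain ⟨V₂, hV₂, rfl⟩ := mem_shiftBlocks.1 hW₂
    obtain ⟨a, ha', rfl⟩ := mem_map.1 ha
    obtain ⟨b, hb', rfl⟩ := mem_map.1 hb
    obtain ⟨c, hc', rfl⟩ := mem_map.1 hc
    obtain ⟨d, hd', rfl⟩ := mem_map.1 hd
    rw [h.eq_of_crossing hV₁ hV₂ ha' hb' hc' hd' (Nat.add_lt_add_iff_right.1 hab)
      (Nat.add_lt_add_iff_right.1 hbc) (Nat.add_lt_add_iff_right.1 hcd)]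

theorem union (h : IsNonCrossingPartition S π) (h' : IsNonCrossingPartition T σ)
    (hlt : ∀ s ∈ S, ∀ t ∈ T, s < t) : IsNonCrossingPartition (S ∪ T) (π ∪ σ) where
  subset V hV := (mem_union.1 hV).elim (fun hV ↦ (h.subset V hV).trans subset_union_left)
    fun hV ↦ (h'.subset V hV).trans subset_union_right
  nonempty V hV := (mem_union.1 hV).elim (h.nonempty V) (h'.nonempty V)
  cover a ha := by
    rcases mem_union.1 ha with ha | ha
    · exact (h.cover a ha).imp fun V hV ↦ ⟨mem_union_left _ hV.1, hV.2⟩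
    · exact (h'.cover a ha).imp fun V hV ↦ ⟨mem_union_right _ hV.1, hV.2⟩
  eq_of_mem hV₁ hV₂ h₁ h₂ := by
    rcases mem_union.1 hV₁ with hV₁ | hV₁ <;> rcases mem_union.1 hV₂ with hV₂ | hV₂
    · exact h.eq_of_mem hV₁ hV₂ h₁ h₂
    · exact absurd (hlt _ (h.subset _ hV₁ h₁) _ (h'.subset _ hV₂ h₂)) (lt_irrefl _)
    · exact absurd (hlt _ (h.subset _ hV₂ h₂) _ (h'.subset _ hV₁ h₁)) (lt_irrefl _)
    · exact h'.eq_of_mem hV₁ hV₂ h₁ h₂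
  eq_of_crossing hV₁ hV₂ ha hb hc hd hab hbc hcd := by
    rcases mem_union.1 hV₁ with hV₁ | hV₁ <;> rcases mem_union.1 hV₂ with hV₂ | hV₂
    · exact h.eq_of_crossing hV₁ hV₂ ha hb hc hd hab hbc hcd
    · exact absurd hbc (hlt _ (h.subset _ hV₁ hc) _ (h'.subset _ hV₂ hb)).not_gt
    · exact absurd hab (hlt _ (h.subset _ hV₂ hb) _ (h'.subset _ hV₁ ha)).not_gt
    · exact h'.eq_of_crossing hV₁ hV₂ ha hb hc hd hab hbc hcd

end IsNonCrossingPartition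

/-- A non-crossing partition of `{1, …, size}`, bundled with its size. -/
@[ext]
structure NCPartition where
  size : ℕ
  blocks : Finset (Finset ℕ)
  isNC : IsNonCrossingPartition (Icc 1 size) blocks

theorem NCPartition.lt_of_mem_shiftBlocks (Q : NCPartition) {c : ℕ} {V : Finset ℕ}
    (hV : V ∈ shiftBlocks c Q.blocks) {a : ℕ} (ha : a ∈ V) : c < a := by
  obtain ⟨W, hW, rfl⟩ := mem_shiftBlocks.1 hV
  obtain ⟨b, hb, rfl⟩ := mem_map.1 ha
  have := (mem_Icc.1 (Q.isNC.subset W hW hb)).1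
  simp only [addRightEmbedding_apply]
  omega

/-- A non-crossing partition of `{1, …, size}` with a distinguished block `root` of size `h`, the
one that contains `1`; the other blocks do not enclose any element of the root. The empty
partition is included, with empty root. -/
@[ext]
structure RootedPartition (h : ℕ) where
  size : ℕ
  root : Finset ℕ
  blocks : Finset (Finset ℕ)
  card_root : root.card = h
  one_mem : size ≠ 0 → 1 ∈ root
  root_subset : root ⊆ Icc 1 size
  isNC : IsNonCrossingPartition (Icc 1 size \ root) blocks
  gap : ∀ y ∈ root, ∀ U ∈ blocks, ∀ x ∈ U, ∀ z ∈ U, x < y → z < y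

/-- The multiplicative weight of a collection `π` of blocks on `n` points: a factor `κ |V|` for
every block `V` and a factor `x` for every point. -/
def blockWeight (κ : ℕ → ℝ≥0∞) (x : ℝ≥0∞) (n : ℕ) (π : Finset (Finset ℕ)) : ℝ≥0∞ :=
  (∏ V ∈ π, κ V.card) * x ^ n

namespace RootedPartition

variable {h : ℕ}

theorem subset_Icc (P : RootedPartition h) {V : Finset ℕ} (hV : V ∈ P.blocks) :
    V ⊆ Icc 1 P.size :=
  (P.isNC.subset V hV).trans sdiff_subset

theorem notMem_root (P : RootedPartition h) {V : Finset ℕ} (hV : V ∈ P.blocks) {a : ℕ}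
    (ha : a ∈ V) : a ∉ P.root :=
  (mem_sdiff.1 (P.isNC.subset V hV ha)).2

theorem root_notMem_blocks (P : RootedPartition h) : P.root ∉ P.blocks := fun hmem ↦
  (P.isNC.nonempty _ hmem).elim fun _ ha ↦ P.notMem_root hmem ha ha

/-- The rooted partition of the empty set. -/
def empty : RootedPartition 0 where
  size := 0
  root := ∅
  blocks := ∅
  card_root := rfl
  one_mem hne := absurd rfl hne
  root_subset := empty_subset _
  isNC := ⟨by simp, by simp, by simp, by simp, by simp⟩
  gap := by simp

theorem size_add_one_notMem_root (P : RootedPartition h) : P.size + 1 ∉ P.root := fun hmem ↦ by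
  have := (mem_Icc.1 (P.root_subset hmem)).2
  omega

theorem Icc_sdiff_insert (P : RootedPartition h) (q : ℕ) :
    Icc 1 (P.size + 1 + q) \ insert (P.size + 1) P.root =
      (Icc 1 P.size \ P.root) ∪ (Icc 1 q).map (addRightEmbedding (P.size + 1)) := by
  ext a
  have hroot := @P.root_subset a
  simp only [map_add_right_Icc, mem_sdiff, mem_union, mem_insert, mem_Icc] at hroot ⊢
  grind

/-- Appends to a rooted partition a new element of the root, followed by the translate of a
non-crossing partition: `(P, Q) ↦ P • Q`. -/
def glue (P : RootedPartition h) (Q : NCPartition) : RootedPartition (h + 1) where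
  size := P.size + 1 + Q.size
  root := insert (P.size + 1) P.root
  blocks := P.blocks ∪ shiftBlocks (P.size + 1) Q.blocks
  card_root := by rw [card_insert_of_notMem P.size_add_one_notMem_root, P.card_root]
  one_mem _ := by
    rcases eq_or_ne P.size 0 with h0 | h0
    · simp [h0]
    · exact mem_insert_of_mem (P.one_mem h0)
  root_subset := insert_subset (by simp) (P.root_subset.trans (Icc_subset_Icc_right (by omega)))
  isNC := by
    rw [P.Icc_sdiff_insert]
    refine P.isNC.union (Q.isNC.shift _) fun s hs t ht ↦ ?_
    simp only [map_add_right_Icc, mem_sdiff, mem_Icc] at hs ht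
    omega
  gap y hy U hU x hx z hz hxy := by
    have hyle : y ≤ P.size + 1 := (mem_insert.1 hy).elim le_of_eq fun hy ↦
      (mem_Icc.1 (P.root_subset hy)).2.trans (Nat.le_succ _)
    rcases mem_union.1 hU with hU | hU
    · rcases mem_insert.1 hy with rfl | hy
      · exact Nat.lt_succ_of_le (mem_Icc.1 (P.subset_Icc hU hz)).2
      · exact P.gap y hy U hU x hx z hz hxy
    · exact absurd (Q.lt_of_mem_shiftBlocks hU hx) (hxy.trans_le hyle).not_gt

theorem disjoint_shiftBlocks (P : RootedPartition h) (Q : NCPartition) :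
    Disjoint P.blocks (shiftBlocks (P.size + 1) Q.blocks) := by
  refine Finset.disjoint_left.2 fun V hV hV' ↦ ?_
  obtain ⟨a, ha⟩ := P.isNC.nonempty V hV
  have := (mem_Icc.1 (P.subset_Icc hV ha)).2
  have := Q.lt_of_mem_shiftBlocks hV' ha
  omega

theorem blockWeight_glue (κ : ℕ → ℝ≥0∞) (x : ℝ≥0∞) (P : RootedPartition h) (Q : NCPartition) :
    blockWeight κ x (P.glue Q).size (P.glue Q).blocks =
      blockWeight κ x P.size P.blocks * x * blockWeight κ x Q.size Q.blocks := by
  simp only [blockWeight, glue, prod_union (P.disjoint_shiftBlocks Q), prod_shiftBlocks,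
    pow_add, pow_one]
  ring

theorem filter_blocks_glue (P : RootedPartition h) (Q : NCPartition) :
    (P.glue Q).blocks.filter (· ⊆ Icc 1 P.size) = P.blocks := by
  have hQ : ∀ V ∈ shiftBlocks (P.size + 1) Q.blocks, ¬ V ⊆ Icc 1 P.size := fun V hV hsub ↦ by
    obtain ⟨a, ha⟩ := (Q.isNC.shift _).nonempty V hV
    have := (mem_Icc.1 (hsub ha)).2
    have := Q.lt_of_mem_shiftBlocks hV ha
    omega
  simp only [glue, filter_union, filter_false_of_mem hQ, union_empty,
    filter_true_of_mem fun _ hV ↦ P.subset_Icc hV]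

theorem size_le_of_glue_eq {P P' : RootedPartition h} {Q Q' : NCPartition}
    (e : P.glue Q = P'.glue Q') : P.size ≤ P'.size := by
  have hmem : P.size + 1 ∈ (P'.glue Q').root := e ▸ mem_insert_self _ _
  rcases mem_insert.1 hmem with hs | hs
  · omega
  · have := (mem_Icc.1 (P'.root_subset hs)).2
    omega

theorem erase_root_glue (P : RootedPartition h) (Q : NCPartition) :
    (P.glue Q).root.erase (P.size + 1) = P.root :=
  erase_insert P.size_add_one_notMem_root

theorem sdiff_blocks_glue (P : RootedPartition h) (Q : NCPartition) :
    (P.glue Q).blocks \ P.blocks = shiftBlocks (P.size + 1) Q.blocks :=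
  union_sdiff_cancel_left (P.disjoint_shiftBlocks Q)

theorem glue_injective :
    Function.Injective fun PQ : RootedPartition h × NCPartition ↦ PQ.1.glue PQ.2 := by
  rintro ⟨P, Q⟩ ⟨P', Q'⟩ (e : P.glue Q = P'.glue Q')
  have hsize : P.size = P'.size := (size_le_of_glue_eq e).antisymm (size_le_of_glue_eq e.symm)
  have hroot : P.root = P'.root := by
    rw [← P.erase_root_glue Q, ← P'.erase_root_glue Q', e, hsize]
  have hblocks : P.blocks = P'.blocks := by
    rw [← P.filter_blocks_glue Q, ← P'.filter_blocks_glue Q', e, hsize]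
  have hsizeQ : Q.size = Q'.size := by
    have : P.size + 1 + Q.size = P'.size + 1 + Q'.size := congrArg size e
    omega
  have hblocksQ : Q.blocks = Q'.blocks := by
    refine shiftBlocks_injective (P'.size + 1) ?_
    rw [← P'.sdiff_blocks_glue Q', ← e, ← hsize, ← hblocks, P.sdiff_blocks_glue Q]
  exact Prod.ext (RootedPartition.ext hsize hroot hblocks) (NCPartition.ext hsizeQ hblocksQ)

/-- Forgets which block is the root. -/
def toNCPartition (P : RootedPartition h) : NCPartition where
  size := P.size
  blocks := (insert P.root P.blocks).erase ∅
  isNC := by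
    refine ⟨?_, fun V hV ↦ nonempty_iff_ne_empty.2 (mem_erase.1 hV).1, fun a ha ↦ ?_, ?_, ?_⟩
    · simp only [mem_erase, mem_insert]
      rintro V ⟨-, rfl | hV⟩
      exacts [P.root_subset, P.subset_Icc hV]
    · by_cases haR : a ∈ P.root
      · exact ⟨P.root, mem_erase.2 ⟨(ne_empty_of_mem haR), mem_insert_self _ _⟩, haR⟩
      · obtain ⟨V, hV, haV⟩ := P.isNC.cover a (mem_sdiff.2 ⟨ha, haR⟩)
        exact ⟨V, mem_erase.2 ⟨ne_empty_of_mem haV, mem_insert_of_mem hV⟩, haV⟩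
    · simp only [mem_erase, mem_insert]
      rintro V₁ V₂ a ⟨-, rfl | h₁⟩ ⟨-, rfl | h₂⟩ ha₁ ha₂
      exacts [rfl, absurd ha₁ (P.notMem_root h₂ ha₂), absurd ha₂ (P.notMem_root h₁ ha₁),
        P.isNC.eq_of_mem h₁ h₂ ha₁ ha₂]
    · simp only [mem_erase, mem_insert]
      rintro V₁ V₂ a b c d ⟨-, rfl | h₁⟩ ⟨-, rfl | h₂⟩ ha hb hc hd hab hbc hcd
      exacts [rfl, absurd (P.gap c hc V₂ h₂ b hb d hd hbc) hcd.not_gt,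
        absurd (P.gap b hb V₁ h₁ a ha c hc hab) hbc.not_gt,
        P.isNC.eq_of_crossing h₁ h₂ ha hb hc hd hab hbc hcd]

theorem empty_notMem_blocks (P : RootedPartition h) : ∅ ∉ P.blocks := fun hmem ↦
  not_nonempty_empty (P.isNC.nonempty _ hmem)

theorem blocks_toNCPartition_erase_root (P : RootedPartition h) :
    P.toNCPartition.blocks.erase P.root = P.blocks := by
  rw [toNCPartition, erase_right_comm, erase_insert P.root_notMem_blocks,
    erase_eq_of_notMem P.empty_notMem_blocks]

theorem blockWeight_toNCPartition {κ : ℕ → ℝ≥0∞} (hκ : κ 0 = 1) (x : ℝ≥0∞)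
    (P : RootedPartition h) :
    blockWeight κ x P.toNCPartition.size P.toNCPartition.blocks =
      κ h * blockWeight κ x P.size P.blocks := by
  simp only [blockWeight, toNCPartition]
  rw [prod_erase _ (by rw [card_empty, hκ]), prod_insert P.root_notMem_blocks, P.card_root,
    mul_assoc]

theorem root_eq_of_toNCPartition_eq {h' : ℕ} {P : RootedPartition h} {P' : RootedPartition h'}
    (e : P.toNCPartition = P'.toNCPartition) : P.root = P'.root := by
  have hsize : P.size = P'.size := congrArg NCPartition.size e
  rcases eq_or_ne P.size 0 with h0 | h0
  · have hP := P.root_subset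
    have hP' := P'.root_subset
    rw [← hsize] at hP'
    simp only [h0, Icc_eq_empty_of_lt Nat.zero_lt_one, subset_empty] at hP hP'
    rw [hP, hP']
  · have h1 : 1 ∈ P.root := P.one_mem h0
    have h1' : 1 ∈ P'.root := P'.one_mem (hsize ▸ h0)
    refine P.toNCPartition.isNC.eq_of_mem (mem_erase.2 ⟨ne_empty_of_mem h1, mem_insert_self _ _⟩)
      ?_ h1 h1'
    exact e ▸ mem_erase.2 ⟨ne_empty_of_mem h1', mem_insert_self _ _⟩

theorem toNCPartition_injective :
    Function.Injective fun P : (h : ℕ) × RootedPartition h ↦ P.2.toNCPartition := by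
  rintro ⟨h, P⟩ ⟨h', P'⟩ (e : P.toNCPartition = P'.toNCPartition)
  have hroot := root_eq_of_toNCPartition_eq e
  have hblocks : P.blocks = P'.blocks := by
    rw [← P.blocks_toNCPartition_erase_root, ← P'.blocks_toNCPartition_erase_root, e, hroot]
  obtain rfl : h = h' := by rw [← P.card_root, ← P'.card_root, hroot]
  rw [RootedPartition.ext (congrArg NCPartition.size e) hroot hblocks]

end RootedPartition

section GeneratingFunction

open RootedPartition

variable (κ : ℕ → ℝ≥0∞) (x : ℝ≥0∞)

theorem tsum_blockWeight_NCPartition :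
    ∑' Q : NCPartition, blockWeight κ x Q.size Q.blocks = ∑' n, freeMoment κ n * x ^ n := by
  let e : NCPartition ≃ (n : ℕ) × {π // π ∈ NCP n} :=
    { toFun := fun Q ↦ ⟨Q.size, Q.blocks, mem_NCP_iff.2 Q.isNC⟩
      invFun := fun P ↦ ⟨P.1, P.2.1, mem_NCP_iff.1 P.2.2⟩
      left_inv := fun _ ↦ rfl
      right_inv := fun _ ↦ rfl }
  calc ∑' Q : NCPartition, blockWeight κ x Q.size Q.blocks
      = ∑' P : (n : ℕ) × {π // π ∈ NCP n}, blockWeight κ x P.1 P.2.1 :=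
        e.tsum_eq fun P ↦ blockWeight κ x P.1 P.2.1
    _ = ∑' n, freeMoment κ n * x ^ n := by
        rw [ENNReal.tsum_sigma']
        refine tsum_congr fun n ↦ ?_
        rw [Finset.tsum_subtype (NCP n) (blockWeight κ x n), freeMoment, sum_mul]
        rfl

theorem pow_le_tsum_blockWeight_rooted (h : ℕ) :
    (x * ∑' n, freeMoment κ n * x ^ n) ^ h ≤
      ∑' P : RootedPartition h, blockWeight κ x P.size P.blocks := by
  induction h with
  | zero =>
    refine le_trans ?_ (ENNReal.le_tsum RootedPartition.empty)
    simp [blockWeight, RootedPartition.empty]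
  | succ h ih =>
    calc (x * ∑' n, freeMoment κ n * x ^ n) ^ (h + 1)
        ≤ (∑' P : RootedPartition h, blockWeight κ x P.size P.blocks) *
            (x * ∑' Q : NCPartition, blockWeight κ x Q.size Q.blocks) := by
          rw [pow_succ, tsum_blockWeight_NCPartition]
          gcongr
      _ = ∑' PQ : RootedPartition h × NCPartition,
            blockWeight κ x (PQ.1.glue PQ.2).size (PQ.1.glue PQ.2).blocks := by
          rw [ENNReal.tsum_prod (f := fun (P : RootedPartition h) (Q : NCPartition) ↦
            blockWeight κ x (P.glue Q).size (P.glue Q).blocks)]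
          simp only [blockWeight_glue, ENNReal.tsum_mul_left, ENNReal.tsum_mul_right, mul_assoc]
      _ ≤ ∑' P : RootedPartition (h + 1), blockWeight κ x P.size P.blocks :=
          ENNReal.tsum_comp_le_tsum_of_injective glue_injective
            fun P ↦ blockWeight κ x P.size P.blocks

theorem tsum_mul_pow_le_tsum_freeMoment {κ : ℕ → ℝ≥0∞} (hκ : κ 0 = 1) :
    ∑' h, κ h * (x * ∑' n, freeMoment κ n * x ^ n) ^ h ≤ ∑' n, freeMoment κ n * x ^ n := by
  calc ∑' h, κ h * (x * ∑' n, freeMoment κ n * x ^ n) ^ h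
      ≤ ∑' h, ∑' P : RootedPartition h, κ h * blockWeight κ x P.size P.blocks := by
        simp only [ENNReal.tsum_mul_left]
        gcongr with h
        exact pow_le_tsum_blockWeight_rooted κ x h
    _ = ∑' P : (h : ℕ) × RootedPartition h,
          blockWeight κ x P.2.toNCPartition.size P.2.toNCPartition.blocks := by
        rw [ENNReal.tsum_sigma']
        simp only [blockWeight_toNCPartition hκ]
    _ ≤ ∑' Q : NCPartition, blockWeight κ x Q.size Q.blocks :=
        ENNReal.tsum_comp_le_tsum_of_injective toNCPartition_injective
          fun Q ↦ blockWeight κ x Q.size Q.blocks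
    _ = ∑' n, freeMoment κ n * x ^ n := tsum_blockWeight_NCPartition κ x

end GeneratingFunction

theorem ofReal_freeMoment {k : ℕ → ℝ} (hk : ∀ n, 0 ≤ k n) (n : ℕ) :
    freeMoment (fun a ↦ ENNReal.ofReal (k a)) n = ENNReal.ofReal (freeMoment k n) := by
  rw [freeMoment, freeMoment, ENNReal.ofReal_sum_of_nonneg fun _ _ ↦ prod_nonneg fun _ _ ↦ hk _]
  exact sum_congr rfl fun π _ ↦ (ENNReal.ofReal_prod_of_nonneg fun _ _ ↦ hk _).symm

theorem sum_mul_pow_le_tsum_freeMoment {k : ℕ → ℝ} (hk : ∀ n, 0 ≤ k n) (hk0 : k 0 = 1) {x : ℝ}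
    (hx : 0 ≤ x) (hs : Summable fun n ↦ freeMoment k n * x ^ n) (s : Finset ℕ) :
    ∑ h ∈ s, k h * (x * ∑' n, freeMoment k n * x ^ n) ^ h ≤ ∑' n, freeMoment k n * x ^ n := by
  have hterm : ∀ n, 0 ≤ freeMoment k n * x ^ n := fun n ↦
    mul_nonneg (freeMoment_nonneg hk n) (pow_nonneg hx n)
  have hΦ : ∑' n, freeMoment (fun a ↦ ENNReal.ofReal (k a)) n * ENNReal.ofReal x ^ n =
      ENNReal.ofReal (∑' n, freeMoment k n * x ^ n) := by
    rw [ENNReal.ofReal_tsum_of_nonneg hterm hs]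
    refine tsum_congr fun n ↦ ?_
    rw [ofReal_freeMoment hk, ENNReal.ofReal_mul (freeMoment_nonneg hk n), ENNReal.ofReal_pow hx]
  have hw : 0 ≤ x * ∑' n, freeMoment k n * x ^ n := mul_nonneg hx (tsum_nonneg hterm)
  rw [← ENNReal.ofReal_le_ofReal_iff (tsum_nonneg hterm), ← hΦ,
    ENNReal.ofReal_sum_of_nonneg fun h _ ↦ mul_nonneg (hk h) (pow_nonneg hw h)]
  refine le_trans (le_of_eq (sum_congr rfl fun h _ ↦ ?_)) ((ENNReal.sum_le_tsum s).trans
    (tsum_mul_pow_le_tsum_freeMoment (ENNReal.ofReal x) (by rw [hk0, ENNReal.ofReal_one])))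
  rw [hΦ, ← ENNReal.ofReal_mul hx, ← ENNReal.ofReal_pow hw, ← ENNReal.ofReal_mul (hk h)]

theorem summable_mul_pow_mul_tsum_freeMoment {k : ℕ → ℝ} (hk : ∀ n, 0 ≤ k n) (hk0 : k 0 = 1)
    {x : ℝ} (hx : 0 ≤ x) (hs : Summable fun n ↦ freeMoment k n * x ^ n) :
    Summable fun h ↦ k h * (x * ∑' n, freeMoment k n * x ^ n) ^ h :=
  summable_of_sum_le (fun h ↦ mul_nonneg (hk h) (pow_nonneg (mul_nonneg hx (tsum_nonneg fun n ↦
    mul_nonneg (freeMoment_nonneg hk n) (pow_nonneg hx n))) h))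
    (sum_mul_pow_le_tsum_freeMoment hk hk0 hx hs)

/-! ### The variational functional -/

section Variational

variable {k p : ℕ → ℝ}

/-- `p` is a probability measure on `{n ≥ 1 | k n ≠ 0}` with finite mean and finite entropy
relative to `k`: a competitor in the variational problem for the free cumulants `k`. -/
structure IsAdmissible (k p : ℕ → ℝ) : Prop where
  nonneg : ∀ n, 0 ≤ p n
  zero : p 0 = 0
  hasSum_one : HasSum p 1
  support : ∀ n, k n = 0 → p n = 0
  summable_mean : Summable fun n : ℕ ↦ (n : ℝ) * p n
  summable_log : Summable fun n : ℕ ↦ p n * Real.log (k n / p n)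

/-- The mean `m₁(p)`. -/
def mean (p : ℕ → ℝ) : ℝ := ∑' n : ℕ, (n : ℝ) * p n

/-- The functional `p ↦ m₁(p)⁻¹ ∑ pₙ log (kₙ / pₙ) + Θ(m₁(p)) / m₁(p)`. -/
def variationalValue (k p : ℕ → ℝ) : ℝ :=
  (mean p)⁻¹ * (∑' n : ℕ, p n * Real.log (k n / p n)) + Theta (mean p) / mean p

/-- The values of the variational functional on the admissible measures. -/
def variationalValues (k : ℕ → ℝ) : Set ℝ := variationalValue k '' {p | IsAdmissible k p}

theorem variationalValues_subset_of_eq {k' : ℕ → ℝ} (h : ∀ n, 1 ≤ n → k n = k' n) :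
    variationalValues k ⊆ variationalValues k' := by
  rintro _ ⟨p, hp, rfl⟩
  have hlog : ∀ n, p n * Real.log (k n / p n) = p n * Real.log (k' n / p n) := by
    rintro (_ | n)
    · simp only [hp.zero, zero_mul]
    · rw [h (n + 1) n.succ_pos]
  refine ⟨p, ⟨hp.nonneg, hp.zero, hp.hasSum_one, ?_, hp.summable_mean, ?_⟩, ?_⟩
  · rintro (_ | n) hn
    · exact hp.zero
    · exact hp.support _ ((h (n + 1) n.succ_pos).trans hn)
  · simpa only [hlog] using hp.summable_log
  · simp only [variationalValue, hlog]

theorem variationalValues_congr {k' : ℕ → ℝ} (h : ∀ n, 1 ≤ n → k n = k' n) :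
    variationalValues k = variationalValues k' :=
  (variationalValues_subset_of_eq h).antisymm
    (variationalValues_subset_of_eq fun n hn ↦ (h n hn).symm)

theorem mul_log_div_le_sub {q a : ℝ} (hq : 0 ≤ q) (ha : 0 ≤ a) (h0 : a = 0 → q = 0) :
    q * Real.log (a / q) ≤ a - q := by
  rcases hq.eq_or_lt with rfl | hq
  · simpa using ha
  · have ha : 0 < a := lt_of_le_of_ne ha fun e ↦ hq.ne' (h0 e.symm)
    calc q * Real.log (a / q) ≤ q * (a / q - 1) :=
          mul_le_mul_of_nonneg_left (Real.log_le_sub_one_of_pos (div_pos ha hq)) hq.le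
      _ = a - q := by field_simp

theorem gibbs_inequality {ι : Type*} {q a : ι → ℝ} {A J : ℝ} (hq : ∀ i, 0 ≤ q i)
    (ha : ∀ i, 0 ≤ a i) (h0 : ∀ i, a i = 0 → q i = 0) (hq1 : HasSum q 1) (haA : HasSum a A)
    (hA : 0 < A) (hJ : HasSum (fun i ↦ q i * Real.log (a i / q i)) J) : J ≤ Real.log A := by
  have hterm : ∀ i, q i * Real.log (a i / q i) - q i * Real.log A ≤ a i / A - q i := fun i ↦ by
    rcases eq_or_ne (q i) 0 with hqi | hqi
    · simpa [hqi] using div_nonneg (ha i) hA.le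
    · have hai : a i ≠ 0 := fun e ↦ hqi (h0 i e)
      calc q i * Real.log (a i / q i) - q i * Real.log A
          = q i * Real.log (a i / A / q i) := by
            rw [div_right_comm, Real.log_div (div_ne_zero hai hqi) hA.ne', mul_sub]
        _ ≤ a i / A - q i := mul_log_div_le_sub (hq i) (div_nonneg (ha i) hA.le)
            fun e ↦ h0 i ((div_eq_zero_iff.1 e).resolve_right hA.ne')
  have hle := hasSum_le hterm (hJ.sub (hq1.mul_right _)) ((haA.div_const A).sub hq1)
  rw [div_self hA.ne', one_mul, sub_self] at hle
  linarith

theorem Theta_div {m : ℝ} (hm : 1 ≤ m) :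
    Theta m / m = m⁻¹ * Real.log m - (1 - m⁻¹) * Real.log (1 - m⁻¹) := by
  have hm0 : 0 < m := by linarith
  rcases hm.eq_or_lt with rfl | hm
  · simp [Theta]
  · have hne : 1 - m⁻¹ ≠ 0 := (sub_pos.2 (inv_lt_one_of_one_lt₀ hm)).ne'
    rw [Theta, show m - 1 = m * (1 - m⁻¹) by field_simp, Real.log_mul hm0.ne' hne]
    field_simp
    ring

/-- The law with mean one obtained from `p` by mixing it with an atom at `0`. -/
def offspringLaw (p : ℕ → ℝ) : ℕ → ℝ :=
  Function.update (fun n ↦ (mean p)⁻¹ * p n) 0 (1 - (mean p)⁻¹)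

theorem offspringLaw_of_ne_zero {n : ℕ} (hn : n ≠ 0) : offspringLaw p n = (mean p)⁻¹ * p n :=
  Function.update_of_ne hn _ _

theorem offspringLaw_zero : offspringLaw p 0 = 1 - (mean p)⁻¹ :=
  Function.update_self ..

namespace IsAdmissible

theorem one_le_mean (hp : IsAdmissible k p) : 1 ≤ mean p := by
  refine hasSum_le (fun n ↦ ?_) hp.hasSum_one hp.summable_mean.hasSum
  rcases n.eq_zero_or_pos with rfl | hn
  · simp only [hp.zero, mul_zero, le_refl]
  · exact le_mul_of_one_le_left (hp.nonneg n) (by exact_mod_cast hn)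

theorem mean_pos (hp : IsAdmissible k p) : 0 < mean p :=
  one_pos.trans_le hp.one_le_mean

theorem offspringLaw_nonneg (hp : IsAdmissible k p) (n : ℕ) : 0 ≤ offspringLaw p n := by
  rcases eq_or_ne n 0 with rfl | hn
  · rw [offspringLaw_zero, sub_nonneg]
    exact inv_le_one_of_one_le₀ hp.one_le_mean
  · rw [offspringLaw_of_ne_zero hn]
    exact mul_nonneg (inv_nonneg.2 hp.mean_pos.le) (hp.nonneg n)

theorem hasSum_offspringLaw (hp : IsAdmissible k p) : HasSum (offspringLaw p) 1 := by
  have h := (hp.hasSum_one.mul_left (mean p)⁻¹).update 0 (1 - (mean p)⁻¹)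
  rwa [hp.zero, mul_zero, mul_one, sub_zero, sub_add_cancel] at h

theorem hasSum_mul_offspringLaw (hp : IsAdmissible k p) :
    HasSum (fun n : ℕ ↦ (n : ℝ) * offspringLaw p n) 1 := by
  have h : HasSum (fun n : ℕ ↦ (n : ℝ) * p n) (mean p) := hp.summable_mean.hasSum
  have hterm : ∀ n : ℕ, (mean p)⁻¹ * ((n : ℝ) * p n) = (n : ℝ) * offspringLaw p n := fun n ↦ by
    rcases eq_or_ne n 0 with rfl | hn
    · simp only [Nat.cast_zero, zero_mul, mul_zero]
    · rw [offspringLaw_of_ne_zero hn, mul_left_comm]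
  simpa only [hterm, inv_mul_cancel₀ hp.mean_pos.ne'] using h.mul_left (mean p)⁻¹

theorem hasSum_offspringLaw_mul_log (hp : IsAdmissible k p) (hk0 : k 0 = 1) :
    HasSum (fun n ↦ offspringLaw p n * Real.log (k n / offspringLaw p n))
      (variationalValue k p) := by
  have hm := hp.mean_pos
  have h := ((hp.summable_log.hasSum.mul_left (mean p)⁻¹).add
    (hp.hasSum_one.mul_left ((mean p)⁻¹ * Real.log (mean p)))).update 0
      (-(1 - (mean p)⁻¹) * Real.log (1 - (mean p)⁻¹))
  have hterm : (fun n ↦ offspringLaw p n * Real.log (k n / offspringLaw p n)) =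
      Function.update (fun n ↦ (mean p)⁻¹ * (p n * Real.log (k n / p n)) +
        (mean p)⁻¹ * Real.log (mean p) * p n) 0
        (-(1 - (mean p)⁻¹) * Real.log (1 - (mean p)⁻¹)) := by
    funext n
    rcases eq_or_ne n 0 with rfl | hn
    · rw [Function.update_self, offspringLaw_zero, hk0, one_div, Real.log_inv, mul_neg, neg_mul]
    rw [Function.update_of_ne hn, offspringLaw_of_ne_zero hn]
    rcases eq_or_ne (p n) 0 with hpn | hpn
    · simp only [hpn, mul_zero, zero_mul, add_zero]
    have hkn : k n ≠ 0 := fun e ↦ hpn (hp.support n e)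
    rw [Real.log_div hkn (mul_ne_zero (inv_ne_zero hm.ne') hpn), Real.log_div hkn hpn,
      Real.log_mul (inv_ne_zero hm.ne') hpn, Real.log_inv]
    ring
  have hvalue : variationalValue k p = -(1 - (mean p)⁻¹) * Real.log (1 - (mean p)⁻¹) +
      ((mean p)⁻¹ * ∑' n, p n * Real.log (k n / p n) + (mean p)⁻¹ * Real.log (mean p)) := by
    rw [variationalValue, Theta_div hp.one_le_mean]
    ring
  rw [hterm, hvalue]
  simpa only [hp.zero, zero_mul, mul_zero, add_zero, sub_zero, mul_one] using h

theorem variationalValue_le_log (hp : IsAdmissible k p) (hk : ∀ n, 0 ≤ k n) (hk0 : k 0 = 1)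
    {w K : ℝ} (hw : 0 < w) (hK : HasSum (fun n ↦ k n * w ^ n) K) :
    variationalValue k p ≤ Real.log (K / w) := by
  have hnonneg : ∀ n, 0 ≤ k n * w ^ n := fun n ↦ mul_nonneg (hk n) (pow_nonneg hw.le n)
  have hKpos : 0 < K := by
    have := le_hasSum hK 0 fun n _ ↦ hnonneg n
    rw [hk0, pow_zero, mul_one] at this
    exact one_pos.trans_le this
  have hsupp : ∀ n, k n = 0 → offspringLaw p n = 0 := fun n hn ↦ by
    rw [offspringLaw_of_ne_zero (by rintro rfl; exact one_ne_zero (hk0.symm.trans hn)),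
      hp.support n hn, mul_zero]
  have hJ : HasSum (fun n ↦ offspringLaw p n * Real.log (k n * w ^ n / offspringLaw p n))
      (variationalValue k p + 1 * Real.log w) := by
    convert (hp.hasSum_offspringLaw_mul_log hk0).add
      (hp.hasSum_mul_offspringLaw.mul_right (Real.log w)) using 1
    funext n
    rcases eq_or_ne (offspringLaw p n) 0 with hq | hq
    · simp only [hq, mul_zero, zero_mul, add_zero]
    have hkn : k n ≠ 0 := fun e ↦ hq (hsupp n e)
    rw [mul_div_right_comm, Real.log_mul (div_ne_zero hkn hq) (pow_ne_zero n hw.ne'),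
      Real.log_pow]
    ring
  have hle := gibbs_inequality hp.offspringLaw_nonneg hnonneg
    (fun n hn ↦ hsupp n ((mul_eq_zero.1 hn).resolve_right (pow_ne_zero n hw.ne')))
    hp.hasSum_offspringLaw hK hKpos hJ
  rw [Real.log_div hKpos.ne' hw.ne']
  linarith

end IsAdmissible

theorem exists_saddlePoint (hk : ∀ n, 0 ≤ k n) (hk0 : k 0 = 1) {N b : ℕ} (hb : 2 ≤ b)
    (hbN : b < N) (hkb : k b ≠ 0) :
    ∃ w > 0, ∑ a ∈ range N, (a : ℝ) * (k a * w ^ a) = ∑ a ∈ range N, k a * w ^ a := by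
  have hkb : 0 < k b := lt_of_le_of_ne (hk b) hkb.symm
  have hb1 : (1 : ℝ) ≤ b - 1 := by
    have : (2 : ℝ) ≤ b := by exact_mod_cast hb
    linarith
  let g : ℝ → ℝ := fun w ↦ ∑ a ∈ range N, ((a : ℝ) - 1) * (k a * w ^ a)
  have hg0 : g 0 = -1 := by
    refine (sum_eq_single_of_mem 0 (mem_range.2 (by omega)) fun a _ ha ↦ ?_).trans ?_
    · rw [zero_pow ha, mul_zero, mul_zero]
    · simp [hk0]
  set W := 1 + (k b)⁻¹
  have hW : 1 ≤ W := le_add_of_nonneg_right (inv_nonneg.2 hkb.le)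
  have hkW : 1 ≤ k b * W ^ b := calc
    (1 : ℝ) ≤ k b * W := by rw [mul_add, mul_inv_cancel₀ hkb.ne']; linarith
    _ ≤ k b * W ^ b := by gcongr; exact le_self_pow₀ hW (by omega)
  have hgW : 0 ≤ g W := calc
    (0 : ℝ) ≤ ∑ a ∈ {0, b}, ((a : ℝ) - 1) * (k a * W ^ a) := by
        rw [sum_pair (by omega), hk0]
        have := one_le_mul_of_one_le_of_one_le hb1 hkW
        simp only [Nat.cast_zero, pow_zero]
        linarith
    _ ≤ g W := by
        refine sum_le_sum_of_subset_of_nonneg (fun a ha ↦ ?_) fun a _ ha ↦ ?_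
        · simp only [mem_insert, mem_singleton] at ha
          exact mem_range.2 (by omega)
        · have ha0 : a ≠ 0 := by rintro rfl; simp at ha
          have : (1 : ℝ) ≤ a := by exact_mod_cast Nat.one_le_iff_ne_zero.2 ha0
          exact mul_nonneg (by linarith) (mul_nonneg (hk a) (by positivity))
  obtain ⟨w, hwW, hgw⟩ := intermediate_value_Icc (by linarith : (0 : ℝ) ≤ W)
    (by fun_prop : ContinuousOn g _) ⟨hg0 ▸ by norm_num, hgW⟩
  refine ⟨w, lt_of_le_of_ne hwW.1 ?_, sub_eq_zero.1 ?_⟩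
  · rintro rfl
    linarith
  · rw [← sum_sub_distrib, ← hgw]
    exact sum_congr rfl fun a _ ↦ by ring

/-- The probability measure on `{1, …, N - 1}` proportional to `k n * w ^ n`: at a saddle point
`w` it maximises the variational functional among the measures supported there. -/
def tiltedLaw (k : ℕ → ℝ) (w : ℝ) (N n : ℕ) : ℝ :=
  if n ∈ Ico 1 N then k n * w ^ n / ∑ a ∈ Ico 1 N, k a * w ^ a else 0

theorem hasSum_mul_tiltedLaw (k : ℕ → ℝ) (w : ℝ) (N : ℕ) (c : ℕ → ℝ) :
    HasSum (fun n ↦ c n * tiltedLaw k w N n)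
      ((∑ a ∈ Ico 1 N, c a * (k a * w ^ a)) / ∑ a ∈ Ico 1 N, k a * w ^ a) := by
  have hsum : HasSum (fun n ↦ c n * tiltedLaw k w N n) (∑ n ∈ Ico 1 N, c n * tiltedLaw k w N n) :=
    hasSum_sum_of_ne_finset_zero fun n hn ↦ by rw [tiltedLaw, if_neg hn, mul_zero]
  rw [sum_div]
  convert hsum using 1
  exact sum_congr rfl fun n hn ↦ by rw [tiltedLaw, if_pos hn, mul_div_assoc]

theorem tiltedLaw_mul_log {w : ℝ} (hw : 0 < w) {N : ℕ} (hQ : 0 < ∑ a ∈ Ico 1 N, k a * w ^ a)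
    (n : ℕ) : tiltedLaw k w N n * Real.log (k n / tiltedLaw k w N n) =
      Real.log (∑ a ∈ Ico 1 N, k a * w ^ a) * tiltedLaw k w N n -
        Real.log w * (n * tiltedLaw k w N n) := by
  by_cases hn : tiltedLaw k w N n = 0
  · simp only [hn, zero_mul, mul_zero, sub_zero]
  have hmem : n ∈ Ico 1 N := by
    by_contra hmem
    exact hn (if_neg hmem)
  rw [tiltedLaw, if_pos hmem] at hn ⊢
  have hkn : k n ≠ 0 := fun e ↦ hn (by rw [e, zero_mul, zero_div])
  rw [show k n / (k n * w ^ n / ∑ a ∈ Ico 1 N, k a * w ^ a) =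
    (∑ a ∈ Ico 1 N, k a * w ^ a) / w ^ n by field_simp, Real.log_div hQ.ne' (by positivity),
    Real.log_pow]
  ring

theorem exists_log_div_mem_variationalValues (hk : ∀ n, 0 ≤ k n) (hk0 : k 0 = 1)
    {N b : ℕ} (hb : 2 ≤ b) (hbN : b < N) (hkb : k b ≠ 0) :
    ∃ w > 0, Real.log ((∑ a ∈ range N, k a * w ^ a) / w) ∈ variationalValues k := by
  obtain ⟨w, hw, hsaddle⟩ := exists_saddlePoint hk hk0 hb hbN hkb
  have hterm : ∀ a, 0 ≤ k a * w ^ a := fun a ↦ mul_nonneg (hk a) (pow_nonneg hw.le a)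
  have hsplit (f : ℕ → ℝ) : ∑ a ∈ range N, f a = f 0 + ∑ a ∈ Ico 1 N, f a :=
    sum_range_eq_add_Ico f (by omega)
  rw [hsplit, hsplit, hk0, Nat.cast_zero, zero_mul, zero_add, pow_zero, mul_one] at hsaddle
  set Q := ∑ a ∈ Ico 1 N, k a * w ^ a with hQdef
  have hQ : 0 < Q := sum_pos' (fun a _ ↦ hterm a) ⟨b, mem_Ico.2 ⟨by omega, hbN⟩,
    mul_pos (lt_of_le_of_ne (hk b) hkb.symm) (pow_pos hw b)⟩
  have hone : HasSum (tiltedLaw k w N) 1 := by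
    simpa only [one_mul, ← hQdef, div_self hQ.ne'] using hasSum_mul_tiltedLaw k w N fun _ ↦ 1
  have hmean : HasSum (fun n : ℕ ↦ (n : ℝ) * tiltedLaw k w N n) ((1 + Q) / Q) :=
    hsaddle ▸ hasSum_mul_tiltedLaw k w N fun n ↦ n
  have hlog : HasSum (fun n ↦ tiltedLaw k w N n * Real.log (k n / tiltedLaw k w N n))
      (Real.log Q * 1 - Real.log w * ((1 + Q) / Q)) := by
    simp only [tiltedLaw_mul_log hw hQ]
    exact (hone.mul_left _).sub (hmean.mul_left _)
  refine ⟨w, hw, tiltedLaw k w N, ⟨fun n ↦ ?_, by simp [tiltedLaw], hone, fun n hn ↦ ?_,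
    hmean.summable, hlog.summable⟩, ?_⟩
  · rw [tiltedLaw]
    split_ifs
    exacts [div_nonneg (hterm n) hQ.le, le_rfl]
  · rw [tiltedLaw, hn, zero_mul, zero_div, ite_self]
  · rw [hsplit, hk0, pow_zero, mul_one, ← hQdef, variationalValue, mean, hmean.tsum_eq,
      hlog.tsum_eq, Theta, show (1 + Q) / Q - 1 = Q⁻¹ by field_simp; ring,
      show 1 - ((1 + Q) / Q)⁻¹ = (1 + Q)⁻¹ by field_simp; ring,
      Real.log_inv, Real.log_inv, Real.log_div (by positivity) hw.ne']
    field_simp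
    ring

theorem hasSum_mul_pi_single_one (c : ℕ → ℝ) :
    HasSum (fun n ↦ c n * (Pi.single 1 1 : ℕ → ℝ) n) (c 1) := by
  have hsum : HasSum (fun n ↦ c n * (Pi.single 1 1 : ℕ → ℝ) n)
      (c 1 * (Pi.single 1 1 : ℕ → ℝ) 1) :=
    hasSum_single 1 fun n hn ↦ by rw [Pi.single_eq_of_ne hn, mul_zero]
  rwa [Pi.single_eq_same, mul_one] at hsum

theorem isAdmissible_pi_single_one (hk1 : k 1 ≠ 0) : IsAdmissible k (Pi.single 1 1) where
  nonneg := (Pi.single_nonneg (α := fun _ ↦ ℝ)).2 zero_le_one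
  zero := Pi.single_eq_of_ne zero_ne_one 1
  hasSum_one := hasSum_pi_single 1 1
  support n hn := Pi.single_eq_of_ne (by rintro rfl; exact hk1 hn) 1
  summable_mean := (hasSum_mul_pi_single_one _).summable
  summable_log := by
    simpa only [mul_comm] using (hasSum_mul_pi_single_one fun n ↦
      Real.log (k n / (Pi.single 1 1 : ℕ → ℝ) n)).summable

theorem variationalValue_pi_single_one (k : ℕ → ℝ) :
    variationalValue k (Pi.single 1 1) = Real.log (k 1) := by
  have hmean : mean (Pi.single 1 1) = 1 :=
    (hasSum_mul_pi_single_one fun n ↦ n).tsum_eq.trans Nat.cast_one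
  have hlog := (hasSum_mul_pi_single_one fun n ↦
    Real.log (k n / (Pi.single 1 1 : ℕ → ℝ) n)).tsum_eq
  simp only [mul_comm (Real.log _), Pi.single_eq_same, div_one] at hlog
  simp [variationalValue, hmean, hlog, Theta]

theorem IsAdmissible.eq_pi_single_one (hp : IsAdmissible k p) (hk : ∀ n, 2 ≤ n → k n = 0) :
    p = Pi.single 1 1 := by
  have hne : ∀ n, n ≠ 1 → p n = 0 := fun n hn ↦ by
    rcases n.eq_zero_or_pos with rfl | hpos
    exacts [hp.zero, hp.support n (hk n (by omega))]
  funext n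
  rcases eq_or_ne n 1 with rfl | hn
  · rw [Pi.single_eq_same, (hasSum_single 1 hne).unique hp.hasSum_one]
  · rw [hne n hn, Pi.single_eq_of_ne hn]

theorem variationalValues_of_forall_two_le_eq_zero (hk : ∀ n, 2 ≤ n → k n = 0) (hk1 : k 1 ≠ 0) :
    variationalValues k = {Real.log (k 1)} := by
  have hset : {p | IsAdmissible k p} = {Pi.single 1 1} :=
    Set.eq_singleton_iff_unique_mem.2
      ⟨isAdmissible_pi_single_one hk1, fun _ hp ↦ hp.eq_pi_single_one hk⟩
  rw [variationalValues, hset, Set.image_singleton, variationalValue_pi_single_one]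

theorem variationalValues_of_forall_one_le_eq_zero (hk : ∀ n, 1 ≤ n → k n = 0) :
    variationalValues k = ∅ := by
  refine Set.image_eq_empty.2 (Set.eq_empty_of_forall_notMem fun p hp ↦ ?_)
  have hp0 : p = 0 := funext fun n ↦ by
    rcases n.eq_zero_or_pos with rfl | hn
    exacts [hp.zero, hp.support n (hk n hn)]
  exact one_ne_zero (hp.hasSum_one.unique (hp0 ▸ hasSum_zero))

theorem IsAdmissible.variationalValue_le_neg_log (hp : IsAdmissible k p) (hk : ∀ n, 0 ≤ k n)
    (hk0 : k 0 = 1) {x : ℝ} (hx : 0 < x) (hs : Summable fun n ↦ freeMoment k n * x ^ n) :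
    variationalValue k p ≤ -Real.log x := by
  set Φ := ∑' n, freeMoment k n * x ^ n
  have hsum := summable_mul_pow_mul_tsum_freeMoment hk hk0 hx.le hs
  have hle : ∑' h, k h * (x * Φ) ^ h ≤ Φ :=
    hsum.tsum_le_of_sum_le (sum_mul_pow_le_tsum_freeMoment hk hk0 hx.le hs)
  have hone : 1 ≤ ∑' h, k h * (x * Φ) ^ h := by
    have hΦ0 : 0 ≤ Φ := tsum_nonneg fun n ↦
      mul_nonneg (freeMoment_nonneg hk n) (pow_nonneg hx.le n)
    simpa [hk0] using hsum.le_tsum 0 fun h _ ↦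
      mul_nonneg (hk h) (pow_nonneg (mul_nonneg hx.le hΦ0) h)
  have hΦpos : 0 < Φ := by linarith
  calc variationalValue k p
      ≤ Real.log ((∑' h, k h * (x * Φ) ^ h) / (x * Φ)) :=
        hp.variationalValue_le_log hk hk0 (mul_pos hx hΦpos) hsum.hasSum
    _ ≤ Real.log (Φ / (x * Φ)) :=
        Real.log_le_log (div_pos (by linarith) (mul_pos hx hΦpos)) (by gcongr)
    _ = -Real.log x := by rw [div_mul_cancel_right₀ hΦpos.ne', Real.log_inv]

theorem freeMoment_le_exp_pow (hk : ∀ n, 0 ≤ k n) (hk0 : k 0 = 1) {b : ℕ} (hb : 2 ≤ b)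
    (hkb : k b ≠ 0) {s : ℝ} (hs : s ∈ upperBounds (variationalValues k)) {n : ℕ} (hn : b ≤ n) :
    freeMoment k n ≤ Real.exp s ^ n := by
  obtain ⟨w, hw, hmem⟩ := exists_log_div_mem_variationalValues hk hk0 hb (Nat.lt_succ_of_le hn) hkb
  have hpos : 0 < ∑ a ∈ range (n + 1), k a * w ^ a :=
    sum_pos' (fun a _ ↦ mul_nonneg (hk a) (pow_nonneg hw.le a))
      ⟨0, mem_range.2 n.succ_pos, by simp [hk0]⟩
  have hle := (Real.log_le_iff_le_exp (div_pos hpos hw)).1 (hs hmem)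
  exact (freeMoment_le_div_pow hk hk0 hw n).trans
    (pow_le_pow_left₀ (div_pos hpos hw).le hle n)

theorem freeMoment_le_pow_of_forall_two_le_eq_zero (hk : ∀ n, 0 ≤ k n) (hk0 : k 0 = 1)
    (hk2 : ∀ n, 2 ≤ n → k n = 0) {r : ℝ} (hr : k 1 < r) (n : ℕ) : freeMoment k n ≤ r ^ n := by
  have hδ : 0 < r - k 1 := sub_pos.2 hr
  set w := (r - k 1)⁻¹
  have hw : 0 < w := inv_pos.2 hδ
  have hterm : ∀ a, 0 ≤ k a * w ^ a := fun a ↦ mul_nonneg (hk a) (pow_nonneg hw.le a)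
  have hsum : ∑ a ∈ range (n + 1), k a * w ^ a ≤ ∑ a ∈ range 2, k a * w ^ a := calc
    _ ≤ ∑ a ∈ range (n + 2), k a * w ^ a :=
      sum_le_sum_of_subset_of_nonneg (range_mono (by omega)) fun a _ _ ↦ hterm a
    _ = ∑ a ∈ range 2, k a * w ^ a :=
      (sum_subset (range_mono (by omega)) fun a _ ha ↦ by
        rw [hk2 a (not_lt.1 (mem_range.not.1 ha)), zero_mul]).symm
  have hvalue : (∑ a ∈ range 2, k a * w ^ a) / w = r := by
    rw [sum_range_succ, sum_range_one, hk0, pow_zero, pow_one, add_div,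
      mul_div_cancel_right₀ _ hw.ne', mul_one, one_div, inv_inv, sub_add_cancel]
  calc freeMoment k n ≤ ((∑ a ∈ range (n + 1), k a * w ^ a) / w) ^ n :=
        freeMoment_le_div_pow hk hk0 hw n
    _ ≤ r ^ n := by
        rw [← hvalue]
        gcongr
        exact div_nonneg (sum_nonneg fun a _ ↦ hterm a) hw.le

end Variational

/-! ### The edge of the support -/

section SupportEdge

open Filter

variable {μ : Measure ℝ}

theorem integrable_pow_of_isBoundedUnder_abs [IsFiniteMeasure μ]
    (hμ : IsBoundedUnder (· ≤ ·) (ae μ) fun t ↦ |t|) (n : ℕ) : Integrable (fun t ↦ t ^ n) μ := by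
  obtain ⟨R, hR⟩ := hμ
  refine .of_bound (by fun_prop) (R ^ n) ?_
  filter_upwards [eventually_map.1 hR] with t ht
  rw [norm_pow]
  exact pow_le_pow_left₀ (norm_nonneg t) ht n

theorem pow_add_pow_le_two {u : ℝ} (hu : u ≤ 1) (n : ℕ) : u ^ n + u ^ (2 * n + 1) ≤ 2 := by
  rcases le_total |u| 1 with h | h
  · have hpow (m : ℕ) : u ^ m ≤ 1 :=
      (le_abs_self _).trans ((abs_pow u m).trans_le (pow_le_one₀ (abs_nonneg u) h))
    linarith [hpow n, hpow (2 * n + 1)]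
  · rcases le_abs'.1 h with h' | h'
    · have hodd : u ^ (2 * n + 1) = -|u| ^ (2 * n + 1) := by
        rw [abs_of_neg (by linarith), ← Odd.neg_pow ⟨n, rfl⟩, neg_neg]
      have hle : u ^ n ≤ |u| ^ (2 * n + 1) := calc
        u ^ n ≤ |u| ^ n := (le_abs_self _).trans_eq (abs_pow u n)
        _ ≤ |u| ^ (2 * n + 1) := pow_le_pow_right₀ h (by omega)
      linarith
    · norm_num [le_antisymm hu h']

theorem integral_pow_le_two_mul_pow [IsProbabilityMeasure μ]
    (hμ : IsBoundedUnder (· ≤ ·) (ae μ) fun t ↦ |t|) {c : ℝ} (hc : 0 < c) (hle : ∀ᵐ t ∂μ, t ≤ c)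
    {n : ℕ} (hodd : 0 ≤ ∫ t, t ^ (2 * n + 1) ∂μ) : ∫ t, t ^ n ∂μ ≤ 2 * c ^ n := by
  have hint := integrable_pow_of_isBoundedUnder_abs hμ
  have hscaled : ∫ t, ((t / c) ^ n + (t / c) ^ (2 * n + 1)) ∂μ ≤ ∫ _, 2 ∂μ := by
    simp only [div_pow]
    refine integral_mono_ae (((hint _).div_const _).add ((hint _).div_const _))
      (integrable_const _) ?_
    filter_upwards [hle] with t ht
    simpa only [div_pow] using pow_add_pow_le_two ((div_le_one hc).2 ht) n
  simp only [div_pow] at hscaled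
  rw [integral_add ((hint _).div_const _) ((hint _).div_const _), integral_div, integral_div,
    integral_const, probReal_univ, one_smul] at hscaled
  rw [← div_le_iff₀ (pow_pos hc n)]
  linarith [div_nonneg hodd (pow_pos hc (2 * n + 1)).le]

theorem ae_le_of_integral_pow_le [IsFiniteMeasure μ]
    (hμ : IsBoundedUnder (· ≤ ·) (ae μ) fun t ↦ |t|) {c : ℝ} (hc : 0 < c)
    (h : ∀ᶠ n in atTop, ∫ t, t ^ n ∂μ ≤ c ^ n) {r : ℝ} (hcr : c < r) : ∀ᵐ t ∂μ, t ≤ r := by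
  have hr : 0 < r := hc.trans hcr
  have heven : Tendsto (fun n ↦ 2 * n) atTop atTop := tendsto_id.const_mul_atTop' two_pos
  have hmarkov (n : ℕ) : r ^ (2 * n) * μ.real (Set.Ioi r) ≤ ∫ t, t ^ (2 * n) ∂μ := calc
    _ ≤ r ^ (2 * n) * μ.real {t | r ^ (2 * n) ≤ t ^ (2 * n)} :=
      mul_le_mul_of_nonneg_left
        (measureReal_mono fun t ht ↦ pow_le_pow_left₀ hr.le (le_of_lt ht) _) (by positivity)
    _ ≤ ∫ t, t ^ (2 * n) ∂μ := mul_meas_ge_le_integral_of_nonneg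
      (.of_forall fun t ↦ (even_two_mul n).pow_nonneg t)
      (integrable_pow_of_isBoundedUnder_abs hμ _) _
  have htail : ∀ᶠ n in atTop, μ.real (Set.Ioi r) ≤ (c / r) ^ (2 * n) := by
    filter_upwards [heven.eventually h] with n hn
    rw [div_pow, le_div_iff₀' (pow_pos hr _)]
    exact (hmarkov n).trans hn
  have hzero : μ.real (Set.Ioi r) ≤ 0 := ge_of_tendsto
    ((tendsto_pow_atTop_nhds_zero_of_lt_one (div_pos hc hr).le ((div_lt_one hr).2 hcr)).comp heven)
    htail
  have hnull := (measureReal_eq_zero_iff).1 (hzero.antisymm measureReal_nonneg)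
  simp only [ae_iff, not_le]
  exact hnull

theorem essSup_id_le_of_integral_pow_le [IsFiniteMeasure μ] [NeZero μ]
    (hμ : IsBoundedUnder (· ≤ ·) (ae μ) fun t ↦ |t|) {c : ℝ} (hc : 0 < c)
    (h : ∀ᶠ n in atTop, ∫ t, t ^ n ∂μ ≤ c ^ n) : essSup id μ ≤ c :=
  le_of_forall_gt_imp_ge_of_dense fun r hcr ↦ essSup_le_of_ae_le r
    (ae_le_of_integral_pow_le hμ hc h hcr)
    (isBoundedUnder_le_abs.1 hμ).2.isCoboundedUnder_le

theorem integral_le_essSup_id [IsProbabilityMeasure μ]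
    (hμ : IsBoundedUnder (· ≤ ·) (ae μ) fun t ↦ |t|) : ∫ t, t ∂μ ≤ essSup id μ := by
  have hint : Integrable (fun t ↦ t) μ := by
    simpa only [pow_one] using integrable_pow_of_isBoundedUnder_abs hμ 1
  simpa using integral_mono_ae hint (integrable_const (essSup id μ))
    (ae_le_essSup (f := id) (isBoundedUnder_le_abs.1 hμ).1)

variable {k : ℕ → ℝ}

theorem summable_freeMoment_mul_inv_pow [IsProbabilityMeasure μ]
    (hμ : IsBoundedUnder (· ≤ ·) (ae μ) fun t ↦ |t|) (hk : ∀ n, 0 ≤ k n)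
    (hM : ∀ n, ∫ t, t ^ n ∂μ = freeMoment k n) {z : ℝ} (hz : 0 < z) (hlt : essSup id μ < z) :
    Summable fun n ↦ freeMoment k n * z⁻¹ ^ n := by
  obtain ⟨c, hc, hcz⟩ := exists_between (max_lt hz hlt)
  have hc0 : 0 < c := (le_max_left _ _).trans_lt hc
  have hle : ∀ᵐ t ∂μ, t ≤ c :=
    (ae_lt_of_essSup_lt ((le_max_right _ _).trans_lt hc) (isBoundedUnder_le_abs.1 hμ).1).mono
      fun _ ↦ le_of_lt
  refine .of_nonneg_of_le (fun n ↦ mul_nonneg (freeMoment_nonneg hk n) (by positivity))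
    (fun n ↦ ?_) ((summable_geometric_of_lt_one (div_nonneg hc0.le hz.le)
      ((div_lt_one hz).2 hcz)).mul_left 2)
  rw [div_eq_mul_inv, mul_pow, ← mul_assoc, ← hM n]
  gcongr
  exact integral_pow_le_two_mul_pow hμ hc0 hle (hM _ ▸ freeMoment_nonneg hk _)

theorem exp_le_essSup_id [IsProbabilityMeasure μ]
    (hμ : IsBoundedUnder (· ≤ ·) (ae μ) fun t ↦ |t|) (hk : ∀ n, 0 ≤ k n) (hk0 : k 0 = 1)
    (hM : ∀ n, ∫ t, t ^ n ∂μ = freeMoment k n) {v : ℝ} (hv : v ∈ variationalValues k) :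
    Real.exp v ≤ essSup id μ := by
  obtain ⟨p, hp, rfl⟩ := hv
  have hpos {z : ℝ} (hz : 0 < z) (hlt : essSup id μ < z) : Real.exp (variationalValue k p) ≤ z := by
    have hle := hp.variationalValue_le_neg_log hk hk0 (inv_pos.2 hz)
      (summable_freeMoment_mul_inv_pow hμ hk hM hz hlt)
    rwa [Real.log_inv, neg_neg, Real.le_log_iff_exp_le hz] at hle
  have hρ : 0 < essSup id μ := by
    by_contra! hρ
    have := hpos (half_pos (Real.exp_pos (variationalValue k p)))
      (hρ.trans_lt (half_pos (Real.exp_pos _)))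
    linarith [Real.exp_pos (variationalValue k p)]
  exact le_of_forall_gt_imp_ge_of_dense fun z hz ↦ hpos (hρ.trans hz) hz

theorem isLUB_variationalValues [IsProbabilityMeasure μ]
    (hμ : IsBoundedUnder (· ≤ ·) (ae μ) fun t ↦ |t|) (hk : ∀ n, 0 ≤ k n) (hk0 : k 0 = 1)
    (hM : ∀ n, ∫ t, t ^ n ∂μ = freeMoment k n) {b : ℕ} (hb : 2 ≤ b) (hkb : k b ≠ 0) :
    IsLUB (variationalValues k) (Real.log (essSup id μ)) := by
  obtain ⟨w, -, hw⟩ := exists_log_div_mem_variationalValues hk hk0 hb b.lt_succ_self hkb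
  have hρ : 0 < essSup id μ := (Real.exp_pos _).trans_le (exp_le_essSup_id hμ hk hk0 hM hw)
  refine ⟨fun v hv ↦ (Real.le_log_iff_exp_le hρ).2 (exp_le_essSup_id hμ hk hk0 hM hv),
    fun s hs ↦ (Real.log_le_iff_le_exp hρ).2 ?_⟩
  refine essSup_id_le_of_integral_pow_le hμ (Real.exp_pos s) ?_
  filter_upwards [eventually_ge_atTop b] with n hn
  exact (hM n).trans_le (freeMoment_le_exp_pow hk hk0 hb hkb hs hn)

theorem essSup_id_eq_of_forall_two_le_eq_zero [IsProbabilityMeasure μ]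
    (hμ : IsBoundedUnder (· ≤ ·) (ae μ) fun t ↦ |t|) (hk : ∀ n, 0 ≤ k n) (hk0 : k 0 = 1)
    (hM : ∀ n, ∫ t, t ^ n ∂μ = freeMoment k n) (hk2 : ∀ n, 2 ≤ n → k n = 0) :
    essSup id μ = k 1 := by
  refine le_antisymm (le_of_forall_gt_imp_ge_of_dense fun r hr ↦ ?_) ?_
  · exact essSup_id_le_of_integral_pow_le hμ ((hk 1).trans_lt hr) (.of_forall fun n ↦
      (hM n).trans_le (freeMoment_le_pow_of_forall_two_le_eq_zero hk hk0 hk2 hr n))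
  · calc k 1 = ∫ t, t ∂μ := by simp only [← freeMoment_one k, ← hM, pow_one]
      _ ≤ essSup id μ := integral_le_essSup_id hμ

theorem log_essSup_id_eq_sSup_variationalValues [IsProbabilityMeasure μ]
    (hμ : IsBoundedUnder (· ≤ ·) (ae μ) fun t ↦ |t|) (hk : ∀ n, 0 ≤ k n) (hk0 : k 0 = 1)
    (hM : ∀ n, ∫ t, t ^ n ∂μ = freeMoment k n) :
    Real.log (essSup id μ) = sSup (variationalValues k) := by
  by_cases hb : ∃ b, 2 ≤ b ∧ k b ≠ 0
  · obtain ⟨b, hb, hkb⟩ := hb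
    have hLUB := isLUB_variationalValues hμ hk hk0 hM hb hkb
    exact (hLUB.csSup_eq hLUB.nonempty).symm
  push Not at hb
  rw [essSup_id_eq_of_forall_two_le_eq_zero hμ hk hk0 hM hb]
  rcases eq_or_ne (k 1) 0 with hk1 | hk1
  · -- `μ` is the Dirac mass at `0`: both sides are junk values, `log 0 = 0` and `sSup ∅ = 0`.
    have hzero : ∀ n, 1 ≤ n → k n = 0 := fun n hn ↦
      hn.eq_or_lt.elim (fun h ↦ h ▸ hk1) (hb n)
    rw [variationalValues_of_forall_one_le_eq_zero hzero, Real.sSup_empty, hk1, Real.log_zero]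
  · rw [variationalValues_of_forall_two_le_eq_zero hb hk1, csSup_singleton]

end SupportEdge

/-- **The maximum of the support via free cumulants (nonnegative cumulants).**
Let `μ` be a compactly supported probability measure on `ℝ` whose free cumulants `k_n`
(defined by the free moment–cumulant formula) are all nonnegative, and let
`L = {n | k_n ≠ 0}`. Then the maximum `ρ_μ = inf {r | μ((r,∞)) = 0}` of the support of
`μ` satisfies
`log ρ_μ = sup { (1/m₁(p)) ∑_{n∈L} p_n log(k_n/p_n) + Θ(m₁(p))/m₁(p) : p ∈ 𝔐₁¹(L) }`. -/
theorem support_edge_of_nonneg_free_cumulants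
    (μ : Measure ℝ) [IsProbabilityMeasure μ]
    (hcpt : ∃ R : ℝ, μ {x : ℝ | R < |x|} = 0)
    (k : ℕ → ℝ) (hknn : ∀ n, 1 ≤ n → 0 ≤ k n)
    (hmc : ∀ n : ℕ, 1 ≤ n →
      ∫ t, t ^ n ∂μ = ∑ π ∈ NCP n, ∏ V ∈ π, k V.card) :
    Real.log (sInf {r : ℝ | μ (Set.Ioi r) = 0}) =
      sSup {v : ℝ | ∃ p : ℕ → ℝ, (∀ n, 0 ≤ p n) ∧ p 0 = 0 ∧ HasSum p 1 ∧
        (∀ n, k n = 0 → p n = 0) ∧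
        Summable (fun n : ℕ => (n : ℝ) * p n) ∧
        Summable (fun n : ℕ => p n * Real.log (k n / p n)) ∧
        v = (∑' n : ℕ, (n : ℝ) * p n)⁻¹ * (∑' n : ℕ, p n * Real.log (k n / p n))
            + Theta (∑' n : ℕ, (n : ℝ) * p n) / (∑' n : ℕ, (n : ℝ) * p n)} := by
  trans sSup (variationalValues k)
  swap
  · congr 1
    ext v
    exact ⟨fun ⟨p, hp, h⟩ ↦ ⟨p, hp.nonneg, hp.zero, hp.hasSum_one, hp.support, hp.summable_mean,
      hp.summable_log, h.symm⟩, fun ⟨p, h1, h2, h3, h4, h5, h6, h⟩ ↦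
        ⟨p, ⟨h1, h2, h3, h4, h5, h6⟩, h.symm⟩⟩
  have hbounded : Filter.IsBoundedUnder (· ≤ ·) (ae μ) fun t ↦ |t| := by
    obtain ⟨R, hR⟩ := hcpt
    exact ⟨R, by simpa [ae_iff] using hR⟩
  -- The letter `0` of a Łukasiewicz word has weight `1`, whatever the junk value `k 0`.
  set c := Function.update k 0 1
  have hkc : ∀ n, 1 ≤ n → k n = c n := fun n hn ↦ (Function.update_of_ne (by omega) 1 k).symm
  have hc0 : c 0 = 1 := Function.update_self ..
  have hc : ∀ n, 0 ≤ c n := fun n ↦ by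
    rcases n.eq_zero_or_pos with rfl | hn
    exacts [hc0 ▸ zero_le_one, hkc n hn ▸ hknn n hn]
  have hmoment : ∀ n, ∫ t, t ^ n ∂μ = freeMoment c n := fun n ↦ by
    rcases n.eq_zero_or_pos with rfl | hn
    · simp [freeMoment_zero]
    · rw [hmc n hn, ← freeMoment_congr hkc, freeMoment]
  rw [variationalValues_congr hkc,
    ← log_essSup_id_eq_sSup_variationalValues hbounded hc hc0 hmoment, essSup_eq_sInf]
  rfl

end
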